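/- Let B > 0, ζ ∈ ℝ, m, V ∈ ℝ, k ≥ 1 an integer, and ε ∈ {−1, +1}. Define φ_j(x) = He_j(√(2B)·(x − ζ/B)) · exp(−B·(x − ζ/B)²/2) for j ∈ ℕ, where He_j is the j-th probabilists' Hermite polynomial. Then there exist complex numbers c₁, c₂, not both zero, such that the pair (ψ₁, ψ₂) with ψ₁(x) = c₁·φ_k(x) and ψ₂(x) = c₂·φ_{k−1}(x) solves the Dirac eigenvalue system with data A₂(x) = B·x, constant mass m, constant potential V, momentum ζ, and eigenvalue μ = ε·√(2kB + m²) + V. -/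

import Mathlib

/-- `(ψ₁, ψ₂)` solves the Dirac eigenvalue system for the fibered magnetic Dirac operator
`Ĥ(ζ) = D_x σ₁ + (ζ − A₂(x)) σ₂ + m(x) σ₃ + V(x) σ₀` with eigenvalue `μ`. -/
def SolvesDirac (A₂ m V : ℝ → ℝ) (ζ μ : ℝ) (ψ₁ ψ₂ : ℝ → ℂ) : Prop :=
  (∀ x, DifferentiableAt ℝ ψ₁ x) ∧ (∀ x, DifferentiableAt ℝ ψ₂ x) ∧
  (∀ x : ℝ,
    -Complex.I * deriv ψ₂ x - Complex.I * ((ζ : ℂ) - (A₂ x : ℂ)) * ψ₂ x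
      + ((V x : ℂ) + (m x : ℂ)) * ψ₁ x = (μ : ℂ) * ψ₁ x) ∧
  (∀ x : ℝ,
    -Complex.I * deriv ψ₁ x + Complex.I * ((ζ : ℂ) - (A₂ x : ℂ)) * ψ₁ x
      + ((V x : ℂ) - (m x : ℂ)) * ψ₂ x = (μ : ℂ) * ψ₂ x)

/-- The `j`-th probabilists' Hermite polynomial, evaluated over `ℝ`. -/
noncomputable def He (j : ℕ) (t : ℝ) : ℝ := Polynomial.aeval t (Polynomial.hermite j)

/-- The `j`-th Hermite (Landau) function with magnetic field `B` and momentum `ζ`. -/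
noncomputable def landauFun (B ζ : ℝ) (j : ℕ) (x : ℝ) : ℝ :=
  He j (Real.sqrt (2 * B) * (x - ζ / B)) * Real.exp (-(B * (x - ζ / B) ^ 2 / 2))

/-
With `w x = ζ - A₂ x`, the off-diagonal parts of the Dirac operator are `-i (d/dx ± w)`. If they act
as ladder operators, `g' + w g = -b f` and `f' - w f = a g`, the system on `(c₁ f, c₂ g)` with
eigenvalue `E + V` reduces to `i b c₂ = (E - m) c₁` and `-i a c₁ = (E + m) c₂`. It is solved by
`c₁ = i b`, `c₂ = E - m` as soon as `E² = a b + m²`. For `A₂ x = B x` the Hermite recurrences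
`He_{n+1}' = (n + 1) He_n` and `He_n' = t He_n - He_{n+1}` make `f = φ_{n+1}`, `g = φ_n` such a
pair, with `a = (n + 1) √(2B)` and `b = √(2B)`.
-/

open Polynomial in
theorem derivative_hermite_succ (n : ℕ) :
    derivative (hermite (n + 1)) = ((n : ℤ[X]) + 1) * hermite n := by
  induction n with
  | zero => simp
  | succ n ih =>
    have derivative_ih : derivative (((n : ℤ[X]) + 1) * hermite n)
        = ((n : ℤ[X]) + 1) * derivative (hermite n) := by
      simp [derivative_mul]
    rw [hermite_succ (n + 1), derivative_sub, derivative_mul, derivative_X, ih, derivative_ih]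
    push_cast
    linear_combination (-((n : ℤ[X]) + 1)) * hermite_succ n

theorem hasDerivAt_He (n : ℕ) (t : ℝ) : HasDerivAt (He n) (t * He n t - He (n + 1) t) t := by
  refine ((Polynomial.hermite n).hasDerivAt_aeval t).congr_deriv ?_
  simp [He, Polynomial.hermite_succ]

theorem hasDerivAt_He_succ (n : ℕ) (t : ℝ) : HasDerivAt (He (n + 1)) ((n + 1) * He n t) t := by
  refine ((Polynomial.hermite (n + 1)).hasDerivAt_aeval t).congr_deriv ?_
  rw [derivative_hermite_succ]
  simp [He]

theorem sub_mul_eq_neg_mul_sub_div {K : Type*} [Field K] {b : K} (hb : b ≠ 0) (z x : K) :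
    z - b * x = -(b * (x - z / b)) := by
  rw [mul_sub, mul_div_cancel₀ z hb, neg_sub]

theorem hasDerivAt_landauFun_of_hasDerivAt_He {B ζ x d : ℝ} {j : ℕ} (hB : B ≠ 0)
    (hd : HasDerivAt (He j) d (√(2 * B) * (x - ζ / B))) :
    HasDerivAt (landauFun B ζ j)
      ((ζ - B * x) * landauFun B ζ j x
        + √(2 * B) * d * Real.exp (-(B * (x - ζ / B) ^ 2 / 2))) x := by
  have h_center : HasDerivAt (fun y : ℝ => y - ζ / B) 1 x := (hasDerivAt_id x).sub_const _
  have h_hermite := hd.comp x (h_center.const_mul √(2 * B))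
  have h_gauss := (((h_center.pow 2).const_mul B).div_const 2).neg.exp
  refine (h_hermite.mul h_gauss).congr_deriv ?_
  rw [sub_mul_eq_neg_mul_sub_div hB, landauFun]
  simp only [Function.comp_apply, Pi.pow_apply, Pi.neg_apply]
  ring

theorem hasDerivAt_landauFun_succ {B : ℝ} (hB : B ≠ 0) (ζ : ℝ) (n : ℕ) (x : ℝ) :
    HasDerivAt (landauFun B ζ (n + 1))
      ((ζ - B * x) * landauFun B ζ (n + 1) x + (n + 1) * √(2 * B) * landauFun B ζ n x) x := by
  refine (hasDerivAt_landauFun_of_hasDerivAt_He hB (hasDerivAt_He_succ n _)).congr_deriv ?_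
  simp only [landauFun]
  ring

theorem hasDerivAt_landauFun {B : ℝ} (hB : 0 < B) (ζ : ℝ) (n : ℕ) (x : ℝ) :
    HasDerivAt (landauFun B ζ n)
      (-(ζ - B * x) * landauFun B ζ n x - √(2 * B) * landauFun B ζ (n + 1) x) x := by
  refine (hasDerivAt_landauFun_of_hasDerivAt_He hB.ne' (hasDerivAt_He n _)).congr_deriv ?_
  have h_sq : √(2 * B) ^ 2 = 2 * B := Real.sq_sqrt (by positivity)
  simp only [sub_mul_eq_neg_mul_sub_div hB.ne', landauFun]
  linear_combination (x - ζ / B) * He n (√(2 * B) * (x - ζ / B))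
    * Real.exp (-(B * (x - ζ / B) ^ 2 / 2)) * h_sq

theorem solvesDirac_of_ladder {A : ℝ → ℝ} {m ζ E : ℝ} (V : ℝ) {f g : ℝ → ℂ} {a b : ℂ}
    (hf : ∀ x, HasDerivAt f ((ζ - A x) * f x + a * g x) x)
    (hg : ∀ x, HasDerivAt g (-(ζ - A x) * g x - b * f x) x)
    (hE : (E : ℂ) ^ 2 = a * b + m ^ 2) :
    SolvesDirac A (fun _ => m) (fun _ => V) ζ (E + V)
      (fun x => Complex.I * b * f x) (fun x => (E - m) * g x) := by
  refine ⟨fun x => ((hf x).const_mul _).differentiableAt,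
    fun x => ((hg x).const_mul _).differentiableAt, fun x => ?_, fun x => ?_⟩
  · rw [((hg x).const_mul _).deriv]
    push_cast
    ring
  · rw [((hf x).const_mul _).deriv]
    push_cast
    linear_combination -(a * b * g x) * Complex.I_sq - g x * hE

/-- For `B > 0`, `k ≥ 1` and `ε = ±1`, some nontrivial combination
`(c₁ φ_k, c₂ φ_{k−1})` is an eigenfunction of the bulk magnetic Dirac operator with
eigenvalue `ε√(2kB + m²) + V`. -/
theorem landau_pair_eigenfunction (B ζ m V : ℝ) (hB : 0 < B) (k : ℕ) (hk : 1 ≤ k)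
    (ε : ℝ) (hε : ε = -1 ∨ ε = 1) :
    ∃ c₁ c₂ : ℂ, (c₁ ≠ 0 ∨ c₂ ≠ 0) ∧
      SolvesDirac (fun x => B * x) (fun _ => m) (fun _ => V) ζ
        (ε * Real.sqrt (2 * k * B + m ^ 2) + V)
        (fun x => c₁ * (landauFun B ζ k x : ℂ))
        (fun x => c₂ * (landauFun B ζ (k - 1) x : ℂ)) := by
  obtain ⟨n, rfl⟩ : ∃ n, k = n + 1 := ⟨k - 1, by omega⟩
  set E := ε * √(2 * ((n + 1 : ℕ) : ℝ) * B + m ^ 2) with hE_def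
  have hε_sq : ε ^ 2 = 1 := by rcases hε with rfl | rfl <;> norm_num
  have hE : E ^ 2 = (n + 1) * √(2 * B) * √(2 * B) + m ^ 2 := by
    rw [hE_def, mul_pow, hε_sq, Real.sq_sqrt (by positivity), mul_assoc (n + 1 : ℝ),
      Real.mul_self_sqrt (by positivity)]
    push_cast
    ring
  refine ⟨Complex.I * (√(2 * B) : ℝ), E - m, Or.inl ?_, solvesDirac_of_ladder V
    (a := (n + 1) * (√(2 * B) : ℝ)) (fun x => ?_) (fun x => ?_) (mod_cast hE)⟩
  · exact mul_ne_zero Complex.I_ne_zero (Complex.ofReal_ne_zero.2 (by positivity))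
  · exact_mod_cast (hasDerivAt_landauFun_succ hB.ne' ζ n x).ofReal_comp
  · exact_mod_cast (hasDerivAt_landauFun hB ζ n x).ofReal_comp
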